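/- Let 0 ≤ j ≤ k be non-negative integers and let A and B be τ-structures. The Duplicator has a winning strategy for the (j,k)-pebble-relation game on A and B if and only if the Duplicator has a complete winning strategy for the (j,k)-pebble-relation game on A and B. -/

import Mathlib

/-- A relational structure over vocabulary `σ` with arities `ar`. -/
structure Struct (σ : Type) (ar : σ → ℕ) where
  carrier : Type
  rel : ∀ s : σ, Set (Fin (ar s) → carrier)

namespace Struct

variable {σ : Type} {ar : σ → ℕ}

/-- `h` is a homomorphism from `A` to `B`. -/
def IsHom (A B : Struct σ ar) (h : A.carrier → B.carrier) : Prop :=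
  ∀ s (t : Fin (ar s) → A.carrier), t ∈ A.rel s → (fun i => h (t i)) ∈ B.rel s

/-- `A` homomorphically maps to `B`. -/
def HomTo (A B : Struct σ ar) : Prop := ∃ h, IsHom A B h

/-- `f : I → B` is a homomorphism from the induced substructure `A|I` to `B`. -/
def IsPHom (A B : Struct σ ar) (I : Set A.carrier) (f : ↥I → B.carrier) : Prop :=
  ∀ s (t : Fin (ar s) → A.carrier) (ht : ∀ i, t i ∈ I),
    t ∈ A.rel s → (fun i => f ⟨t i, ht i⟩) ∈ B.rel s

/-- `S_1,…,S_n` is a path-decomposition of `A`. -/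
def IsPathDecomp (A : Struct σ ar) {n : ℕ} (S : Fin n → Set A.carrier) : Prop :=
  (∀ s (t : Fin (ar s) → A.carrier), t ∈ A.rel s → ∃ i, ∀ m, t m ∈ S i) ∧
  (∀ a : A.carrier, ∀ i l p : Fin n, i ≤ l → l ≤ p → a ∈ S i → a ∈ S p → a ∈ S l)

/-- The path-decomposition `S` has width at most `(j,k)`. -/
def DecompWidthLE {A : Struct σ ar} {n : ℕ} (S : Fin n → Set A.carrier)
    (j k : ℕ) : Prop :=
  (∀ i, (S i).Finite ∧ (S i).ncard ≤ k) ∧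
  (∀ i : Fin n, ∀ h : (i : ℕ) + 1 < n, (S i ∩ S ⟨(i : ℕ) + 1, h⟩).ncard ≤ j)

/-- `A` has pathwidth at most `(j,k)`. -/
def PathwidthLE (A : Struct σ ar) (j k : ℕ) : Prop :=
  ∃ (n : ℕ) (S : Fin n → Set A.carrier), IsPathDecomp A S ∧ DecompWidthLE S j k

end Struct

/-- Restriction of a function with domain `I` to a subdomain `I'`. -/
def resFun {α β : Type} {I I' : Set α} (h : I' ⊆ I) (f : ↥I → β) : ↥I' → β :=
  fun x => f ⟨x.1, h x.2⟩

/-- Restriction of a relation (set of functions) with domain `I` to `I'`. -/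
def resRel {α β : Type} {I I' : Set α} (h : I' ⊆ I) (T : Set (↥I → β)) :
    Set (↥I' → β) :=
  resFun h '' T

/-- `H` is a winning strategy for the Duplicator in the `(j,k)`-pebble-relation
game on `A` and `B`.  `H I` is the set of relations in `H` having domain `I`. -/
def IsWinning {σ : Type} {ar : σ → ℕ} (A B : Struct σ ar) (j k : ℕ)
    (H : ∀ I : Set A.carrier, Set (Set (↥I → B.carrier))) : Prop :=
  (∃ I, ∃ T, T ∈ H I) ∧
  (∀ I, ∀ T ∈ H I, I.Finite ∧ I.ncard ≤ k) ∧
  (∀ I, ∀ T ∈ H I, T.Nonempty ∧ ∀ f ∈ T, Struct.IsPHom A B I f) ∧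
  (∀ I, ∀ T ∈ H I, ∀ I' : Set A.carrier, ∀ h : I' ⊆ I, resRel h T ∈ H I') ∧
  (∀ I, ∀ T ∈ H I, I.ncard ≤ j → ∀ I' : Set A.carrier, ∀ h : I ⊆ I',
    I'.Finite → I'.ncard ≤ k → ∃ T' ∈ H I', resRel h T' ⊆ T)

/-- The Duplicator has a winning strategy for the `(j,k)`-pebble-relation game. -/
def HasWinStrategy {σ : Type} {ar : σ → ℕ} (A B : Struct σ ar) (j k : ℕ) : Prop :=
  ∃ H, IsWinning A B j k H

/-- The relation with domain `I''` obtained by extending functions of `T`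
(domain `I' ⊆ I`) to partial homomorphisms on `I` and projecting onto `I''`. -/
def extProj {σ : Type} {ar : σ → ℕ} (A B : Struct σ ar)
    {I I' I'' : Set A.carrier} (h1 : I' ⊆ I) (h2 : I'' ⊆ I)
    (T : Set (↥I' → B.carrier)) : Set (↥I'' → B.carrier) :=
  {g | ∃ f : ↥I → B.carrier, Struct.IsPHom A B I f ∧ resFun h1 f ∈ T ∧
        g = resFun h2 f}

/-- `H` is a complete winning strategy for the `(j,k)`-pebble-relation game on
`A` and `B`.  (`Set.univ` over `↥(∅ : Set A.carrier) → B.carrier` is exactly the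
relation `{λ}` containing only the empty function.) -/
def IsCompleteWinning {σ : Type} {ar : σ → ℕ} (A B : Struct σ ar) (j k : ℕ)
    (H : ∀ I : Set A.carrier, Set (Set (↥I → B.carrier))) : Prop :=
  (∀ I, ∀ T ∈ H I, I.Finite ∧ I.ncard ≤ j) ∧
  ((Set.univ : Set (↥(∅ : Set A.carrier) → B.carrier)) ∈ H ∅) ∧
  (∀ I : Set A.carrier, (∅ : Set (↥I → B.carrier)) ∉ H I) ∧
  (∀ I : Set A.carrier, I.Finite → I.ncard ≤ k →
    ∀ I' : Set A.carrier, ∀ h1 : I' ⊆ I, ∀ T ∈ H I',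
      ∀ I'' : Set A.carrier, ∀ h2 : I'' ⊆ I, I''.ncard ≤ j →
        extProj A B h1 h2 T ∈ H I'')

/-!
Weakening the relations of a winning strategy keeps the extension property: if `T' ∈ H` on `I`
restricts into `T` on `I'`, then projecting `T'` to `I''` gives a member of `H` contained in
`extProj T`. Hence the relations on at most `j` points that contain a member of `H` form a
complete strategy. Conversely, projecting the extensions of a complete strategy to every subset of
the at most `k` points of `I`, and not only to those of size at most `j`, gives a winning strategy.
Its relations are nonempty because all projections of the same extensions are empty together, and
the projection to `∅` belongs to the complete strategy.
-/

/-- A family of relations from `α` to `β`, sorted by their domains: the shape of a strategy of the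
Duplicator. -/
abbrev RelFamily (α β : Type) : Type := ∀ I : Set α, Set (Set (↥I → β))

/-- The relations with domain of size at most `j` that contain a relation of `H`; this turns a
winning strategy into a complete one. `ncard` is `0` on infinite sets, so the size bound is
meaningful only when the domains in `H` are finite. -/
def RelFamily.upClosure {α β : Type} (j : ℕ) (H : RelFamily α β) : RelFamily α β :=
  fun I => {T | I.ncard ≤ j ∧ ∃ T₀ ∈ H I, T₀ ⊆ T}

/-- The relations obtained from a relation of `H` by extending it to partial homomorphisms on a
domain of size at most `k` and projecting to any subset of that domain; this turns a complete
winning strategy into a winning one. -/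
def RelFamily.extProjClosure {σ : Type} {ar : σ → ℕ} (A B : Struct σ ar) (k : ℕ)
    (H : RelFamily A.carrier B.carrier) : RelFamily A.carrier B.carrier :=
  fun I'' => {T | ∃ (I I' : Set A.carrier) (h₁ : I' ⊆ I) (h₂ : I'' ⊆ I),
    I.Finite ∧ I.ncard ≤ k ∧ ∃ T₀ ∈ H I', T = extProj A B h₁ h₂ T₀}

section Strategies

variable {σ : Type} {ar : σ → ℕ} {A B : Struct σ ar} {I I' I'' J : Set A.carrier}

theorem Struct.IsPHom.restrict {f : ↥I → B.carrier} (hf : Struct.IsPHom A B I f) (h : I' ⊆ I) :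
    Struct.IsPHom A B I' (resFun h f) :=
  fun s t ht => hf s t fun i => h (ht i)

theorem isPHom_of_mem_extProj {h₁ : I' ⊆ I} {h₂ : I'' ⊆ I} {T : Set (↥I' → B.carrier)}
    {g : ↥I'' → B.carrier} (hg : g ∈ extProj A B h₁ h₂ T) : Struct.IsPHom A B I'' g := by
  obtain ⟨f, hf, -, rfl⟩ := hg
  exact hf.restrict h₂

theorem extProj_nonempty_iff (h₁ : I' ⊆ I) (h₂ : I'' ⊆ I) (T : Set (↥I' → B.carrier)) :
    (extProj A B h₁ h₂ T).Nonempty ↔ ∃ f, Struct.IsPHom A B I f ∧ resFun h₁ f ∈ T := by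
  constructor
  · rintro ⟨_, f, hf, hfT, rfl⟩
    exact ⟨f, hf, hfT⟩
  · rintro ⟨f, hf, hfT⟩
    exact ⟨resFun h₂ f, f, hf, hfT, rfl⟩

theorem resRel_extProj (h₁ : I' ⊆ I) (h₂ : I'' ⊆ I) (h : J ⊆ I'') (T : Set (↥I' → B.carrier)) :
    resRel h (extProj A B h₁ h₂ T) = extProj A B h₁ (h.trans h₂) T := by
  ext g
  constructor
  · rintro ⟨_, ⟨f, hf, hfT, rfl⟩, rfl⟩
    exact ⟨f, hf, hfT, rfl⟩
  · rintro ⟨f, hf, hfT, rfl⟩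
    exact ⟨resFun h₂ f, ⟨f, hf, hfT, rfl⟩, rfl⟩

theorem extProj_self_subset (h : I' ⊆ I) (T : Set (↥I' → B.carrier)) :
    extProj A B h h T ⊆ T := by
  rintro _ ⟨f, -, hfT, rfl⟩
  exact hfT

theorem resRel_subset_extProj (h₁ : I' ⊆ I) (h₂ : I'' ⊆ I) {S : Set (↥I → B.carrier)}
    {T : Set (↥I' → B.carrier)} (hS : ∀ f ∈ S, Struct.IsPHom A B I f) (hST : resRel h₁ S ⊆ T) :
    resRel h₂ S ⊆ extProj A B h₁ h₂ T := by
  rintro _ ⟨f, hf, rfl⟩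
  exact ⟨f, hS f hf, hST ⟨f, hf, rfl⟩, rfl⟩

variable {j k : ℕ} {H : RelFamily A.carrier B.carrier}

theorem IsWinning.isCompleteWinning_upClosure (hH : IsWinning A B j k H) :
    IsCompleteWinning A B j k (H.upClosure j) := by
  obtain ⟨⟨J, S, hS⟩, domain_le, nonempty_and_isPHom, restrict_mem, exists_extension⟩ := hH
  refine ⟨?domain_le, ?univ_mem, ?empty_notMem, ?extProj_mem⟩
  case domain_le =>
    rintro I T ⟨hIj, T₀, hT₀, -⟩
    exact ⟨(domain_le I T₀ hT₀).1, hIj⟩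
  case univ_mem =>
    exact ⟨by simp, _, restrict_mem J S hS ∅ J.empty_subset, Set.subset_univ _⟩
  case empty_notMem =>
    rintro I ⟨-, T₀, hT₀, hT₀_empty⟩
    exact (nonempty_and_isPHom I T₀ hT₀).1.not_subset_empty hT₀_empty
  case extProj_mem =>
    rintro I hI hIk I' h₁ T ⟨hI'j, T₀, hT₀, hT₀T⟩ I'' h₂ hI''j
    obtain ⟨T', hT', hT'T₀⟩ := exists_extension I' T₀ hT₀ hI'j I h₁ hI hIk
    exact ⟨hI''j, _, restrict_mem I T' hT' I'' h₂,
      resRel_subset_extProj h₁ h₂ (nonempty_and_isPHom I T' hT').2 (hT'T₀.trans hT₀T)⟩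

theorem IsCompleteWinning.extProj_nonempty (hH : IsCompleteWinning A B j k H) (hI : I.Finite)
    (hIk : I.ncard ≤ k) (h₁ : I' ⊆ I) (h₂ : I'' ⊆ I) {T : Set (↥I' → B.carrier)}
    (hT : T ∈ H I') : (extProj A B h₁ h₂ T).Nonempty := by
  obtain ⟨-, -, empty_notMem, extProj_mem⟩ := hH
  have proj_empty_mem : extProj A B h₁ I.empty_subset T ∈ H ∅ :=
    extProj_mem I hI hIk I' h₁ T hT ∅ I.empty_subset (by simp)
  have proj_empty_nonempty : (extProj A B h₁ I.empty_subset T).Nonempty :=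
    Set.nonempty_iff_ne_empty.2 (ne_of_mem_of_not_mem proj_empty_mem (empty_notMem ∅))
  rwa [extProj_nonempty_iff] at proj_empty_nonempty ⊢

theorem IsCompleteWinning.isWinning_extProjClosure (hH : IsCompleteWinning A B j k H) :
    IsWinning A B j k (H.extProjClosure A B k) := by
  have ⟨_, univ_mem, _, extProj_mem⟩ := hH
  refine ⟨?exists_mem, ?domain_le, ?nonempty_and_isPHom, ?restrict_mem, ?exists_extension⟩
  case exists_mem =>
    exact ⟨∅, _, ∅, ∅, subset_rfl, subset_rfl, Set.finite_empty, by simp, _, univ_mem, rfl⟩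
  case domain_le =>
    rintro I'' _ ⟨I, I', h₁, h₂, hI, hIk, -, -, rfl⟩
    exact ⟨hI.subset h₂, (Set.ncard_le_ncard h₂ hI).trans hIk⟩
  case nonempty_and_isPHom =>
    rintro I'' _ ⟨I, I', h₁, h₂, hI, hIk, T, hT, rfl⟩
    exact ⟨hH.extProj_nonempty hI hIk h₁ h₂ hT, fun _ => isPHom_of_mem_extProj⟩
  case restrict_mem =>
    rintro I'' _ ⟨I, I', h₁, h₂, hI, hIk, T, hT, rfl⟩ J hJ
    exact ⟨I, I', h₁, hJ.trans h₂, hI, hIk, T, hT, resRel_extProj h₁ h₂ hJ T⟩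
  case exists_extension =>
    rintro I'' _ ⟨I, I', h₁, h₂, hI, hIk, T, hT, rfl⟩ hI''j J hJ hJ_finite hJk
    have proj_mem : extProj A B h₁ h₂ T ∈ H I'' := extProj_mem I hI hIk I' h₁ T hT I'' h₂ hI''j
    refine ⟨extProj A B hJ subset_rfl (extProj A B h₁ h₂ T),
      ⟨J, I'', hJ, subset_rfl, hJ_finite, hJk, _, proj_mem, rfl⟩, ?_⟩
    rw [resRel_extProj]
    exact extProj_self_subset hJ _

end Strategies

theorem stmt5_general {σ : Type} {ar : σ → ℕ} (j k : ℕ) (A B : Struct σ ar) :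
    (∃ H, IsWinning A B j k H) ↔ (∃ H, IsCompleteWinning A B j k H) :=
  ⟨fun ⟨_, hH⟩ => ⟨_, hH.isCompleteWinning_upClosure⟩,
    fun ⟨_, hH⟩ => ⟨_, hH.isWinning_extProjClosure⟩⟩

/-- the Duplicator has a winning strategy for the
`(j,k)`-pebble-relation game on `A` and `B` iff it has a complete one. -/
theorem stmt5 {σ : Type} {ar : σ → ℕ} [Finite σ] (j k : ℕ) (hjk : j ≤ k)
    (A B : Struct σ ar) :
    (∃ H, IsWinning A B j k H) ↔ (∃ H, IsCompleteWinning A B j k H) := by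
  exact stmt5_general j k A B
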